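/- arXiv:1310.8296 — 2 statements merged into one kernel-verified Lean document; each statement's English description precedes it below -/
import Mathlib

section
/- (Savings plan domestic price formula verification.) Let σ_X, σ_I > 0, ρ ∈ ℝ with |ρ| < 1, r_d, r_f ∈ ℝ, T ∈ ℝ, Y₀ > 0, and set σ² = σ_X² + 2ρσ_Xσ_I + σ_I². Define, for X, I > 0 and t < T, V(X, I, t) = I·e^{r_d t}·N(d̂₁) + X·Y₀·e^{r_f t}·N(−d̂₂), where d̂₁ = (ln(I·e^{r_d t}/(X·Y₀·e^{r_f t})) + (σ²/2)(T−t)) / (σ√(T−t)) and d̂₂ = d̂₁ − σ√(T−t). Then V satisfies ∂V/∂t + (1/2)[σ_X²X² ∂²V/∂X² − 2ρσ_Xσ_I X I ∂²V/∂X∂I + σ_I²I² ∂²V/∂I²] + (r_d − r_f)X ∂V/∂X − r_d V = 0 at every point (X, I, t) with X, I > 0 and t < T. -/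
/-- The standard normal cumulative distribution function
`N(x) = (2π)^{-1/2} ∫_{-∞}^{x} e^{-u²/2} du`. -/
noncomputable def stdNormalCDF (x : ℝ) : ℝ :=
  (Real.sqrt (2 * Real.pi))⁻¹ * ∫ u in Set.Iic x, Real.exp (-u ^ 2 / 2)

/-!
With `A = I e^{r_d t}`, `B = X Y₀ e^{r_f t}` and total volatility `v = σ √(T - t)`, the price is
Margrabe's formula `M(A, B, v) = A N(d₁) + B N(-d₂)` for the better of two assets. The identity
`A φ(d₁) = B φ(d₂)`, with `φ` the standard normal density, cancels the derivatives of `d₁`, leaving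
`∂M/∂A = N(d₁)`, `∂M/∂B = N(-d₂)`, `∂M/∂v = A φ(d₁)`. The second-order terms `X² V_XX`, `-X I V_XI`
and `I² V_II` then all equal `Γ = A φ(d₁) / v`, so together they contribute `σ² Γ / 2`, which is
exactly what the decay of `v` takes away, since `v v' = -σ² / 2`.
-/

open Real Filter MeasureTheory ProbabilityTheory
open scoped Topology

section Normal

theorem hasDerivAt_integral_Iic {E : Type*} [NormedAddCommGroup E] [NormedSpace ℝ E]
    [CompleteSpace E] {f : ℝ → E} {x : ℝ} (hf : Integrable f) (hx : ContinuousAt f x) :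
    HasDerivAt (fun y => ∫ u in Set.Iic y, f u) (f x) x := by
  have hsplit (y : ℝ) :
      ∫ u in Set.Iic y, f u = (∫ u in Set.Iic 0, f u) + ∫ u in (0 : ℝ)..y, f u := by
    rw [← intervalIntegral.integral_Iic_sub_Iic hf.integrableOn hf.integrableOn, add_sub_cancel]
  rw [funext hsplit]
  exact (intervalIntegral.integral_hasDerivAt_right hf.intervalIntegrable
    hf.aestronglyMeasurable.stronglyMeasurableAtFilter hx).const_add _

theorem gaussianPDFReal_zero_one (x : ℝ) :
    gaussianPDFReal 0 1 x = (√(2 * π))⁻¹ * exp (-x ^ 2 / 2) := by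
  simp [gaussianPDFReal]

theorem stdNormalCDF_eq_integral_gaussianPDFReal (x : ℝ) :
    stdNormalCDF x = ∫ u in Set.Iic x, gaussianPDFReal 0 1 u := by
  simp only [stdNormalCDF, gaussianPDFReal_zero_one, integral_const_mul]

theorem continuous_gaussianPDFReal (μ : ℝ) (v : NNReal) : Continuous (gaussianPDFReal μ v) := by
  unfold gaussianPDFReal
  fun_prop

theorem hasDerivAt_stdNormalCDF (x : ℝ) :
    HasDerivAt stdNormalCDF (gaussianPDFReal 0 1 x) x := by
  rw [funext stdNormalCDF_eq_integral_gaussianPDFReal]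
  exact hasDerivAt_integral_Iic (integrable_gaussianPDFReal 0 1)
    (continuous_gaussianPDFReal 0 1).continuousAt

theorem hasDerivAt_stdNormalCDF_comp {f : ℝ → ℝ} {f' x : ℝ} (hf : HasDerivAt f f' x) :
    HasDerivAt (fun y => stdNormalCDF (f y)) (gaussianPDFReal 0 1 (f x) * f') x :=
  (hasDerivAt_stdNormalCDF (f x)).comp x hf

theorem gaussianPDFReal_zero_neg (v : NNReal) (x : ℝ) :
    gaussianPDFReal 0 v (-x) = gaussianPDFReal 0 v x := by
  simp [gaussianPDFReal]

theorem gaussianPDFReal_zero_one_sub (x h : ℝ) :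
    gaussianPDFReal 0 1 (x - h) = exp (x * h - h ^ 2 / 2) * gaussianPDFReal 0 1 x := by
  rw [gaussianPDFReal_zero_one, gaussianPDFReal_zero_one, mul_left_comm, ← exp_add]
  ring_nf

end Normal

section BestOf

/-- The quantity `d₁` of Margrabe's formula for two assets worth `A` and `B` whose log-ratio has
total (time-integrated) volatility `v`. -/
noncomputable def bestOfD₁ (A B v : ℝ) : ℝ := (log (A / B) + v ^ 2 / 2) / v

/-- The quantity `d₂ = d₁ - v` of Margrabe's formula. -/
noncomputable def bestOfD₂ (A B v : ℝ) : ℝ := bestOfD₁ A B v - v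

/-- Margrabe's formula for the value of the claim paying the larger of two assets that are
currently worth `A` and `B`, where `v` is the total volatility of their log-ratio. -/
noncomputable def bestOfValue (A B v : ℝ) : ℝ :=
  A * stdNormalCDF (bestOfD₁ A B v) + B * stdNormalCDF (-bestOfD₂ A B v)

/-- The cash gamma `A φ(d₁) / v` of the better-of claim, the common value of `A² ∂²/∂A²`,
`-A B ∂²/∂A∂B` and `B² ∂²/∂B²` applied to `bestOfValue`. -/
noncomputable def bestOfGamma (A B v : ℝ) : ℝ := A * gaussianPDFReal 0 1 (bestOfD₁ A B v) / v

theorem mul_gaussianPDFReal_bestOfD₂ {A B v : ℝ} (hA : 0 < A) (hB : 0 < B) (hv : v ≠ 0) :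
    B * gaussianPDFReal 0 1 (bestOfD₂ A B v) = A * gaussianPDFReal 0 1 (bestOfD₁ A B v) := by
  have hexponent : bestOfD₁ A B v * v - v ^ 2 / 2 = log (A / B) := by
    rw [bestOfD₁, div_mul_cancel₀ _ hv, add_sub_cancel_right]
  rw [bestOfD₂, gaussianPDFReal_zero_one_sub, hexponent, exp_log (div_pos hA hB), ← mul_assoc,
    mul_div_cancel₀ _ hB.ne']

variable {a b v : ℝ → ℝ} {a' b' v' u : ℝ}

theorem hasDerivAt_bestOfD₁ (ha : HasDerivAt a a' u) (hb : HasDerivAt b b' u)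
    (hv : HasDerivAt v v' u) (ha₀ : a u ≠ 0) (hb₀ : b u ≠ 0) (hv₀ : v u ≠ 0) :
    HasDerivAt (fun y => bestOfD₁ (a y) (b y) (v y))
      ((a' / a u - b' / b u - bestOfD₂ (a u) (b u) (v u) * v') / v u) u := by
  have hlog : HasDerivAt (fun y => log (a y / b y)) (a' / a u - b' / b u) u := by
    refine ((ha.fun_div hb hb₀).log (div_ne_zero ha₀ hb₀)).congr_deriv ?_
    field_simp
  refine ((hlog.fun_add ((hv.fun_pow 2).div_const 2)).fun_div hv hv₀).congr_deriv ?_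
  simp only [bestOfD₂, bestOfD₁]
  field_simp
  ring

theorem hasDerivAt_bestOfD₂ (ha : HasDerivAt a a' u) (hb : HasDerivAt b b' u)
    (hv : HasDerivAt v v' u) (ha₀ : a u ≠ 0) (hb₀ : b u ≠ 0) (hv₀ : v u ≠ 0) :
    HasDerivAt (fun y => bestOfD₂ (a y) (b y) (v y))
      ((a' / a u - b' / b u - bestOfD₁ (a u) (b u) (v u) * v') / v u) u := by
  refine ((hasDerivAt_bestOfD₁ ha hb hv ha₀ hb₀ hv₀).fun_sub hv).congr_deriv ?_
  rw [bestOfD₂]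
  field_simp
  ring

theorem hasDerivAt_bestOfValue (ha : HasDerivAt a a' u) (hb : HasDerivAt b b' u)
    (hv : HasDerivAt v v' u) (ha₀ : 0 < a u) (hb₀ : 0 < b u) (hv₀ : v u ≠ 0) :
    HasDerivAt (fun y => bestOfValue (a y) (b y) (v y))
      (a' * stdNormalCDF (bestOfD₁ (a u) (b u) (v u))
        + b' * stdNormalCDF (-bestOfD₂ (a u) (b u) (v u))
        + a u * gaussianPDFReal 0 1 (bestOfD₁ (a u) (b u) (v u)) * v') u := by
  have hd₁ := hasDerivAt_bestOfD₁ ha hb hv ha₀.ne' hb₀.ne' hv₀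
  have hd₂ : HasDerivAt (fun y => bestOfD₂ (a y) (b y) (v y)) _ u := hd₁.fun_sub hv
  have hN₁ := hasDerivAt_stdNormalCDF_comp hd₁
  have hN₂ := hasDerivAt_stdNormalCDF_comp hd₂.fun_neg
  refine ((ha.fun_mul hN₁).fun_add (hb.fun_mul hN₂)).congr_deriv ?_
  rw [gaussianPDFReal_zero_neg]
  linear_combination (v' - (a' / a u - b' / b u - bestOfD₂ (a u) (b u) (v u) * v') / v u) *
    mul_gaussianPDFReal_bestOfD₂ ha₀ hb₀ hv₀

variable {A B p q x w : ℝ}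

theorem hasDerivAt_bestOfValue_mul_fst (hp : 0 < p) (hB : 0 < B) (hw : w ≠ 0) (hx : 0 < x) :
    HasDerivAt (fun y => bestOfValue (y * p) B w)
      (p * stdNormalCDF (bestOfD₁ (x * p) B w)) x := by
  simpa using hasDerivAt_bestOfValue (hasDerivAt_mul_const p) (hasDerivAt_const x B)
    (hasDerivAt_const x w) (mul_pos hx hp) hB hw

theorem hasDerivAt_bestOfValue_mul_snd (hA : 0 < A) (hq : 0 < q) (hw : w ≠ 0) (hx : 0 < x) :
    HasDerivAt (fun y => bestOfValue A (y * q) w)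
      (q * stdNormalCDF (-bestOfD₂ A (x * q) w)) x := by
  simpa using hasDerivAt_bestOfValue (hasDerivAt_const x A) (hasDerivAt_mul_const q)
    (hasDerivAt_const x w) hA (mul_pos hx hq) hw

theorem sq_mul_deriv_deriv_bestOfValue_mul_fst (hp : 0 < p) (hB : 0 < B) (hw : w ≠ 0)
    (hx : 0 < x) :
    x ^ 2 * deriv (deriv fun y => bestOfValue (y * p) B w) x = bestOfGamma (x * p) B w := by
  have hdelta : deriv (fun y => bestOfValue (y * p) B w) =ᶠ[𝓝 x]
      fun y => p * stdNormalCDF (bestOfD₁ (y * p) B w) := by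
    filter_upwards [lt_mem_nhds hx] with y hy
    exact (hasDerivAt_bestOfValue_mul_fst hp hB hw hy).deriv
  have hd₁ := hasDerivAt_bestOfD₁ (hasDerivAt_mul_const p) (hasDerivAt_const x B)
    (hasDerivAt_const x w) (mul_pos hx hp).ne' hB.ne' hw
  rw [hdelta.deriv_eq, ((hasDerivAt_stdNormalCDF_comp hd₁).const_mul p).deriv, bestOfGamma]
  field_simp
  ring

theorem mul_mul_deriv_deriv_bestOfValue_mul {i : ℝ} (hp : 0 < p) (hq : 0 < q) (hw : w ≠ 0)
    (hx : 0 < x) (hi : 0 < i) :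
    x * i * deriv (fun y => deriv (fun j => bestOfValue (j * p) (y * q) w) i) x =
      -bestOfGamma (i * p) (x * q) w := by
  have hdelta : (fun y => deriv (fun j => bestOfValue (j * p) (y * q) w) i) =ᶠ[𝓝 x]
      fun y => p * stdNormalCDF (bestOfD₁ (i * p) (y * q) w) := by
    filter_upwards [lt_mem_nhds hx] with y hy
    exact (hasDerivAt_bestOfValue_mul_fst hp (mul_pos hy hq) hw hi).deriv
  have hd₁ := hasDerivAt_bestOfD₁ (hasDerivAt_const x (i * p)) (hasDerivAt_mul_const q)
    (hasDerivAt_const x w) (mul_pos hi hp).ne' (mul_pos hx hq).ne' hw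
  rw [hdelta.deriv_eq, ((hasDerivAt_stdNormalCDF_comp hd₁).const_mul p).deriv, bestOfGamma]
  field_simp
  ring

theorem sq_mul_deriv_deriv_bestOfValue_mul_snd (hA : 0 < A) (hq : 0 < q) (hw : w ≠ 0)
    (hx : 0 < x) :
    x ^ 2 * deriv (deriv fun y => bestOfValue A (y * q) w) x = bestOfGamma A (x * q) w := by
  have hdelta : deriv (fun y => bestOfValue A (y * q) w) =ᶠ[𝓝 x]
      fun y => q * stdNormalCDF (-bestOfD₂ A (y * q) w) := by
    filter_upwards [lt_mem_nhds hx] with y hy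
    exact (hasDerivAt_bestOfValue_mul_snd hA hq hw hy).deriv
  have hd₂ := hasDerivAt_bestOfD₂ (hasDerivAt_const x A) (hasDerivAt_mul_const q)
    (hasDerivAt_const x w) hA.ne' (mul_pos hx hq).ne' hw
  rw [hdelta.deriv_eq, ((hasDerivAt_stdNormalCDF_comp hd₂.fun_neg).const_mul q).deriv,
    gaussianPDFReal_zero_neg, bestOfGamma, ← mul_gaussianPDFReal_bestOfD₂ hA (mul_pos hx hq) hw]
  field_simp
  ring

end BestOf

section SavingsPlan

/-- The operator of the domestic pricing equation for a savings plan, applied to `V` at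
`(X, I, t)`: `X` is an exchange rate and `I` a discounted index, with volatilities `σX`, `σI` and
correlation `-ρ` (the mixed term is subtracted), and `rd`, `rf` are the domestic and foreign
interest rates. -/
noncomputable def savingsPlanOperator (σX σI ρ rd rf : ℝ) (V : ℝ → ℝ → ℝ → ℝ) (X I t : ℝ) : ℝ :=
  deriv (fun τ => V X I τ) t
    + (1 / 2) * (σX ^ 2 * X ^ 2 * deriv (deriv (fun x => V x I t)) X
        - 2 * ρ * σX * σI * X * I * deriv (fun x => deriv (fun i => V x i t) I) X
        + σI ^ 2 * I ^ 2 * deriv (deriv (fun i => V X i t)) I)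
    + (rd - rf) * X * deriv (fun x => V x I t) X
    - rd * V X I t

/-- The domestic price of a savings plan: the value of the better of the index account
`I e^{rd t}` and the converted deposit `X Y₀ e^{rf t}`, where `σ` is the volatility of their
ratio. -/
noncomputable def savingsPlanValue (rd rf T Y₀ σ X I t : ℝ) : ℝ :=
  bestOfValue (I * exp (rd * t)) (X * (Y₀ * exp (rf * t))) (σ * √(T - t))

variable {σX σI ρ rd rf T Y₀ σ X I t : ℝ}

theorem savingsPlanOperator_congr {V W : ℝ → ℝ → ℝ → ℝ}
    (h : ∀ X I t : ℝ, 0 < X → 0 < I → t < T → V X I t = W X I t)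
    (hX : 0 < X) (hI : 0 < I) (ht : t < T) :
    savingsPlanOperator σX σI ρ rd rf V X I t = savingsPlanOperator σX σI ρ rd rf W X I t := by
  have htime : (fun τ => V X I τ) =ᶠ[𝓝 t] fun τ => W X I τ :=
    (gt_mem_nhds ht).mono fun τ hτ => h X I τ hX hI hτ
  have hrate : (fun x => V x I t) =ᶠ[𝓝 X] fun x => W x I t :=
    (lt_mem_nhds hX).mono fun x hx => h x I t hx hI ht
  have hindex {x : ℝ} (hx : 0 < x) : (fun i => V x i t) =ᶠ[𝓝 I] fun i => W x i t :=
    (lt_mem_nhds hI).mono fun i hi => h x i t hx hi ht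
  have hmixed : (fun x => deriv (fun i => V x i t) I) =ᶠ[𝓝 X]
      fun x => deriv (fun i => W x i t) I :=
    (lt_mem_nhds hX).mono fun x hx => (hindex hx).deriv_eq
  rw [savingsPlanOperator, savingsPlanOperator, htime.deriv_eq, hrate.deriv.deriv_eq,
    hmixed.deriv_eq, (hindex hX).deriv.deriv_eq, hrate.deriv_eq, h X I t hX hI ht]

theorem hasDerivAt_exp_const_mul (c t : ℝ) :
    HasDerivAt (fun τ => exp (c * τ)) (c * exp (c * t)) t := by
  simpa [mul_comm] using (hasDerivAt_const_mul c (x := t)).exp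

theorem hasDerivAt_mul_sqrt_sub (σ : ℝ) (ht : t < T) :
    HasDerivAt (fun τ => σ * √(T - τ)) (-σ ^ 2 / (2 * (σ * √(T - t)))) t := by
  have hsqrt := ((hasDerivAt_id' t).const_sub T).sqrt (sub_pos.2 ht).ne'
  refine (hsqrt.const_mul σ).congr_deriv ?_
  rcases eq_or_ne σ 0 with rfl | hσ
  · simp
  · field_simp

theorem hasDerivAt_savingsPlanValue_time (hσ : σ ≠ 0) (hY₀ : 0 < Y₀) (hX : 0 < X) (hI : 0 < I)
    (ht : t < T) :
    HasDerivAt (fun τ => savingsPlanValue rd rf T Y₀ σ X I τ)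
      (rd * (I * exp (rd * t)) *
          stdNormalCDF (bestOfD₁ (I * exp (rd * t)) (X * (Y₀ * exp (rf * t))) (σ * √(T - t)))
        + rf * (X * (Y₀ * exp (rf * t))) *
          stdNormalCDF (-bestOfD₂ (I * exp (rd * t)) (X * (Y₀ * exp (rf * t))) (σ * √(T - t)))
        - σ ^ 2 / 2 * bestOfGamma (I * exp (rd * t)) (X * (Y₀ * exp (rf * t))) (σ * √(T - t)))
      t := by
  have hv : σ * √(T - t) ≠ 0 := mul_ne_zero hσ (sqrt_pos.2 (sub_pos.2 ht)).ne'
  refine (hasDerivAt_bestOfValue ((hasDerivAt_exp_const_mul rd t).const_mul I)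
    (((hasDerivAt_exp_const_mul rf t).const_mul Y₀).const_mul X)
    (hasDerivAt_mul_sqrt_sub σ ht) (by positivity) (by positivity) hv).congr_deriv ?_
  rw [bestOfGamma]
  ring

theorem savingsPlanOperator_savingsPlanValue (hσ : σ ≠ 0)
    (hσ2 : σ ^ 2 = σX ^ 2 + 2 * ρ * σX * σI + σI ^ 2) (hY₀ : 0 < Y₀)
    (hX : 0 < X) (hI : 0 < I) (ht : t < T) :
    savingsPlanOperator σX σI ρ rd rf (savingsPlanValue rd rf T Y₀ σ) X I t = 0 := by
  have hv : σ * √(T - t) ≠ 0 := mul_ne_zero hσ (sqrt_pos.2 (sub_pos.2 ht)).ne'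
  have hp : 0 < exp (rd * t) := exp_pos _
  have hq : 0 < Y₀ * exp (rf * t) := by positivity
  have hdelta := (hasDerivAt_bestOfValue_mul_snd (mul_pos hI hp) hq hv hX).deriv
  have hXX := sq_mul_deriv_deriv_bestOfValue_mul_snd (mul_pos hI hp) hq hv hX
  have hXI := mul_mul_deriv_deriv_bestOfValue_mul hp hq hv hX hI
  have hII := sq_mul_deriv_deriv_bestOfValue_mul_fst hp (mul_pos hX hq) hv hI
  rw [savingsPlanOperator, (hasDerivAt_savingsPlanValue_time hσ hY₀ hX hI ht).deriv]
  simp only [savingsPlanValue, hdelta]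
  rw [bestOfValue]
  linear_combination σX ^ 2 / 2 * hXX - ρ * σX * σI * hXI + σI ^ 2 / 2 * hII
    - bestOfGamma (I * exp (rd * t)) (X * (Y₀ * exp (rf * t))) (σ * √(T - t)) / 2 * hσ2

theorem savingsPlanValue_sqrt_eq {σ2 : ℝ} (hσ2 : 0 ≤ σ2) (ht : t ≤ T) :
    savingsPlanValue rd rf T Y₀ (√σ2) X I t =
      I * exp (rd * t) * stdNormalCDF
          ((log (I * exp (rd * t) / (X * Y₀ * exp (rf * t))) + (σ2 / 2) * (T - t))
            / (√σ2 * √(T - t)))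
        + X * Y₀ * exp (rf * t) * stdNormalCDF
          (-((log (I * exp (rd * t) / (X * Y₀ * exp (rf * t))) + (σ2 / 2) * (T - t))
              / (√σ2 * √(T - t))
            - √σ2 * √(T - t))) := by
  have hvariance : (√σ2 * √(T - t)) ^ 2 / 2 = σ2 / 2 * (T - t) := by
    rw [mul_pow, sq_sqrt hσ2, sq_sqrt (sub_nonneg.2 ht)]
    ring
  simp only [savingsPlanValue, bestOfValue, bestOfD₂, bestOfD₁, hvariance, mul_assoc]

theorem variance_pos_of_abs_lt_one (hσI : σI ≠ 0) (hρ : |ρ| < 1) :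
    0 < σX ^ 2 + 2 * ρ * σX * σI + σI ^ 2 := by
  have hρ2 : 0 < 1 - ρ ^ 2 := sub_pos.2 ((sq_lt_one_iff_abs_lt_one ρ).2 hρ)
  calc 0 < (σX + ρ * σI) ^ 2 + (1 - ρ ^ 2) * σI ^ 2 := by positivity
    _ = σX ^ 2 + 2 * ρ * σX * σI + σI ^ 2 := by ring

end SavingsPlan

theorem savings_plan_domestic_formula_general (σX σI ρ rd rf T Y₀ : ℝ)
    (hY₀ : 0 < Y₀) (σ2 : ℝ) (hσ2_pos : 0 < σ2)
    (hσ2 : σ2 = σX ^ 2 + 2 * ρ * σX * σI + σI ^ 2)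
    (V : ℝ → ℝ → ℝ → ℝ)
    (hV : ∀ X I t : ℝ, 0 < X → 0 < I → t < T →
      V X I t = I * exp (rd * t) * stdNormalCDF
            ((log (I * exp (rd * t) / (X * Y₀ * exp (rf * t)))
                + (σ2 / 2) * (T - t))
              / (√σ2 * √(T - t)))
          + X * Y₀ * exp (rf * t) * stdNormalCDF
            (-((log (I * exp (rd * t) / (X * Y₀ * exp (rf * t)))
                  + (σ2 / 2) * (T - t))
                / (√σ2 * √(T - t))
              - √σ2 * √(T - t)))) :
    ∀ X I t : ℝ, 0 < X → 0 < I → t < T →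
      deriv (fun τ => V X I τ) t
          + (1 / 2) * (σX ^ 2 * X ^ 2 * deriv (deriv (fun x => V x I t)) X
              - 2 * ρ * σX * σI * X * I
                  * deriv (fun x => deriv (fun i => V x i t) I) X
              + σI ^ 2 * I ^ 2 * deriv (deriv (fun i => V X i t)) I)
          + (rd - rf) * X * deriv (fun x => V x I t) X
          - rd * V X I t = 0 := by
  intro X I t hX hI ht
  have hV_eq (X I t : ℝ) (hX : 0 < X) (hI : 0 < I) (ht : t < T) :
      V X I t = savingsPlanValue rd rf T Y₀ (√σ2) X I t :=
    (hV X I t hX hI ht).trans (savingsPlanValue_sqrt_eq hσ2_pos.le ht.le).symm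
  exact (savingsPlanOperator_congr hV_eq hX hI ht).trans <|
    savingsPlanOperator_savingsPlanValue (sqrt_pos.2 hσ2_pos).ne'
      ((sq_sqrt hσ2_pos.le).trans hσ2) hY₀ hX hI ht

/-- Savings plan domestic price formula verification. -/
theorem savings_plan_domestic_formula (σX σI ρ rd rf T Y₀ : ℝ)
    (hσX : 0 < σX) (hσI : 0 < σI) (hρ : |ρ| < 1) (hY₀ : 0 < Y₀)
    (σ2 : ℝ) (hσ2 : σ2 = σX ^ 2 + 2 * ρ * σX * σI + σI ^ 2)
    (V : ℝ → ℝ → ℝ → ℝ)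
    (hV : ∀ X I t : ℝ, 0 < X → 0 < I → t < T →
      V X I t = I * Real.exp (rd * t) * stdNormalCDF
            ((Real.log (I * Real.exp (rd * t) / (X * Y₀ * Real.exp (rf * t)))
                + (σ2 / 2) * (T - t))
              / (Real.sqrt σ2 * Real.sqrt (T - t)))
          + X * Y₀ * Real.exp (rf * t) * stdNormalCDF
            (-((Real.log (I * Real.exp (rd * t) / (X * Y₀ * Real.exp (rf * t)))
                  + (σ2 / 2) * (T - t))
                / (Real.sqrt σ2 * Real.sqrt (T - t))
              - Real.sqrt σ2 * Real.sqrt (T - t)))) :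
    ∀ X I t : ℝ, 0 < X → 0 < I → t < T →
      deriv (fun τ => V X I τ) t
          + (1 / 2) * (σX ^ 2 * X ^ 2 * deriv (deriv (fun x => V x I t)) X
              - 2 * ρ * σX * σI * X * I
                  * deriv (fun x => deriv (fun i => V x i t) I) X
              + σI ^ 2 * I ^ 2 * deriv (deriv (fun i => V X i t)) I)
          + (rd - rf) * X * deriv (fun x => V x I t) X
          - rd * V X I t = 0 :=
  savings_plan_domestic_formula_general σX σI ρ rd rf T Y₀ hY₀ σ2
    (hσ2 ▸ variance_pos_of_abs_lt_one hσI.ne' hρ) hσ2 V hV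
end

section
/- (Corporate bond convertible at maturity: dimension reduction.) Let σ_V > 0, ρ ∈ ℝ, T ∈ ℝ, K > 0, α > 0, m > 0, n ≥ 0, let Σ_p : ℝ → ℝ be continuous, and let r : ℝ × (0,∞) → ℝ be an arbitrary function. Let U : (0,∞) × ℝ → ℝ be twice continuously differentiable and define C(V, p, t) = p · U(V/p, t) on (0,∞)² × ℝ. Then: (i) C satisfies ∂C/∂t + (1/2)[σ_V²V² ∂²C/∂V² − 2ρσ_VΣ_p(t) V p ∂²C/∂V∂p + Σ_p(t)²p² ∂²C/∂p²] + r(t,p)·V ∂C/∂V + r(t,p)·p ∂C/∂p − r(t,p)·C = 0 at every point of (0,∞)² × ℝ if and only if U satisfies ∂U/∂t + (1/2)(σ_V² + 2ρσ_VΣ_p(t) + Σ_p(t)²) z² ∂²U/∂z² = 0 at every point of (0,∞) × ℝ; and (ii) C(V, p, T) = max(K·p, (α/(m+nα))·V) for all V, p > 0 if and only if U(z, T) = K + (α/(m+nα))·max(z − K(m+nα)/α, 0) for all z > 0. -/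
/-!
The price `C (V, p, t) = p * U (V / p, t)` is homogeneous of degree one in `(V, p)`, so Euler's
identity `V * C_V + p * C_p = C` cancels every term carrying the short rate. Differentiating
`C_V = u' (z)` and `C_p = u z - z * u' z`, where `z = V / p` and `u = U (·, t)`, shows that all
three second derivatives are multiples of `u'' z / p`, and the pricing operator applied to `C` is
`p` times a one-dimensional operator applied to `U`. The payoff is homogeneous of degree one too,
so both the equation and the terminal condition reduce to functions of `z`.
-/

open Filter Set Topology

/-- The perspective `(x, p) ↦ p * u (x / p)` of a function `u`: its extension to a function that is
homogeneous of degree one and restricts to `u` on `p = 1`. It prices, in currency, a claim whose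
price in units of the numeraire `p` is `u`. -/
def perspective {𝕜 : Type*} [Field 𝕜] (u : 𝕜 → 𝕜) (x p : 𝕜) : 𝕜 :=
  p * u (x / p)

theorem forall_pos_perspective_eq_iff {𝕜 : Type*} [Field 𝕜] [LinearOrder 𝕜]
    [IsStrictOrderedRing 𝕜] {u v : 𝕜 → 𝕜} :
    (∀ x p, 0 < x → 0 < p → perspective u x p = perspective v x p) ↔ ∀ z, 0 < z → u z = v z := by
  refine ⟨fun h z hz => ?_, fun h x p hx hp => congrArg (p * ·) (h (x / p) (div_pos hx hp))⟩
  simpa only [perspective, div_one, one_mul] using h z 1 hz one_pos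

theorem perspective_call_payoff {𝕜 : Type*} [Field 𝕜] [LinearOrder 𝕜] [IsStrictOrderedRing 𝕜]
    (K : 𝕜) {c p : 𝕜} (hc : 0 < c) (hp : 0 < p) (x : 𝕜) :
    perspective (fun z => K + c * max (z - K / c) 0) x p = max (K * p) (c * x) := by
  have hcall (z : 𝕜) : K + c * max (z - K / c) 0 = max K (c * z) := by
    rw [mul_max_of_nonneg _ _ hc.le, ← max_add_add_left, mul_zero, add_zero, mul_sub,
      mul_div_cancel₀ _ hc.ne', add_sub_cancel, max_comm]
  rw [perspective, hcall, mul_max_of_nonneg _ _ hp.le, mul_comm p K, mul_left_comm,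
    mul_div_cancel₀ _ hp.ne']

section Derivatives

variable {𝕜 : Type*} [NontriviallyNormedField 𝕜] {u : 𝕜 → 𝕜} {x p z : 𝕜}

/-- The value at `0` of the tangent line to the graph of `u` at `z`. It is the derivative of
`perspective u x` at `p` when `z = x / p`. -/
noncomputable def tangentIntercept (u : 𝕜 → 𝕜) (z : 𝕜) : 𝕜 :=
  u z - z * deriv u z

theorem hasDerivAt_tangentIntercept (hu : DifferentiableAt 𝕜 u z)
    (hu' : DifferentiableAt 𝕜 (deriv u) z) :
    HasDerivAt (tangentIntercept u) (-(z * deriv (deriv u) z)) z :=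
  (hu.hasDerivAt.sub ((hasDerivAt_id' z).mul hu'.hasDerivAt)).congr_deriv (by ring)

theorem hasDerivAt_const_div (x : 𝕜) (hp : p ≠ 0) :
    HasDerivAt (fun q => x / q) (-(x / p) / p) p :=
  ((hasDerivAt_const p x).div (hasDerivAt_id' p) hp).congr_deriv (by field_simp; ring)

theorem deriv_perspective_left (u : 𝕜 → 𝕜) (hp : p ≠ 0) (x : 𝕜) :
    deriv (fun y => perspective u y p) x = deriv u (x / p) := by
  simp only [perspective, div_eq_inv_mul]
  rw [deriv_const_mul_field, deriv_comp_mul_left, smul_eq_mul, mul_inv_cancel_left₀ hp]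

theorem deriv_deriv_perspective_left (u : 𝕜 → 𝕜) (hp : p ≠ 0) (x : 𝕜) :
    deriv (deriv fun y => perspective u y p) x = deriv (deriv u) (x / p) / p := by
  rw [funext (deriv_perspective_left u hp)]
  simp only [div_eq_inv_mul]
  rw [deriv_comp_mul_left, smul_eq_mul]

theorem deriv_perspective_right (hp : p ≠ 0) (hu : DifferentiableAt 𝕜 u (x / p)) :
    deriv (fun q => perspective u x q) p = tangentIntercept u (x / p) := by
  have h := (hasDerivAt_id' p).mul (hu.hasDerivAt.comp p (hasDerivAt_const_div x hp))
  refine (h.congr_deriv ?_).deriv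
  simp only [Function.comp_apply, tangentIntercept]
  field_simp
  ring

theorem deriv_left_deriv_right_perspective (hp : p ≠ 0)
    (hu : ∀ᶠ w in 𝓝 (x / p), DifferentiableAt 𝕜 u w)
    (hu' : DifferentiableAt 𝕜 (deriv u) (x / p)) :
    deriv (fun y => deriv (fun q => perspective u y q) p) x
      = -(x / p * deriv (deriv u) (x / p)) / p := by
  have hdiv : HasDerivAt (fun y => y / p) (1 / p) x := (hasDerivAt_id' x).div_const p
  have hfirst : (fun y => deriv (fun q => perspective u y q) p)
      =ᶠ[𝓝 x] fun y => tangentIntercept u (y / p) :=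
    (hdiv.continuousAt.eventually hu).mono fun _ => deriv_perspective_right hp
  rw [hfirst.deriv_eq]
  have hsecond := (hasDerivAt_tangentIntercept hu.self_of_nhds hu').comp x hdiv
  exact hsecond.deriv.trans (by ring)

theorem deriv_deriv_perspective_right (hp : p ≠ 0)
    (hu : ∀ᶠ w in 𝓝 (x / p), DifferentiableAt 𝕜 u w)
    (hu' : DifferentiableAt 𝕜 (deriv u) (x / p)) :
    deriv (deriv fun q => perspective u x q) p = (x / p) ^ 2 * deriv (deriv u) (x / p) / p := by
  have hdiv : HasDerivAt (fun q => x / q) (-(x / p) / p) p := hasDerivAt_const_div x hp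
  have hfirst : deriv (fun q => perspective u x q) =ᶠ[𝓝 p] fun q => tangentIntercept u (x / q) := by
    filter_upwards [hdiv.continuousAt.eventually hu, eventually_ne_nhds hp] with q hq hq0
      using deriv_perspective_right hq0 hq
  rw [hfirst.deriv_eq]
  have hsecond := (hasDerivAt_tangentIntercept hu.self_of_nhds hu').comp p hdiv
  exact hsecond.deriv.trans (by ring)

end Derivatives

/-- The left-hand side of the bond pricing equation at `(V, p, t)`, for a price `C` depending on the
firm value `V`, the discount bond price `p` and time. The coefficients are their values at that
point: the volatilities `σ` of `V` and `s` of `p`, the correlation parameter `ρ`, whose sign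
convention makes the mixed term negative, and the short rate `r`. -/
noncomputable def bondPricingOperator (σ ρ s r : ℝ) (C : ℝ → ℝ → ℝ → ℝ) (V p t : ℝ) : ℝ :=
  deriv (fun τ => C V p τ) t
    + (1 / 2) * (σ ^ 2 * V ^ 2 * deriv (deriv (fun v => C v p t)) V
        - 2 * ρ * σ * s * V * p * deriv (fun v => deriv (fun q => C v q t) p) V
        + s ^ 2 * p ^ 2 * deriv (deriv (fun q => C V q t)) p)
    + r * V * deriv (fun v => C v p t) V
    + r * p * deriv (fun q => C V q t) p
    - r * C V p t

/-- The left-hand side at `(z, t)` of the pricing equation for `U` in the single variable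
`z = V / p`, with coefficients given by their values as in `bondPricingOperator`. -/
noncomputable def reducedPricingOperator (σ ρ s : ℝ) (U : ℝ → ℝ → ℝ) (z t : ℝ) : ℝ :=
  deriv (fun τ => U z τ) t
    + (1 / 2) * (σ ^ 2 + 2 * ρ * σ * s + s ^ 2) * z ^ 2 * deriv (deriv (fun w => U w t)) z

theorem bondPricingOperator_perspective (σ ρ s r : ℝ) {U : ℝ → ℝ → ℝ} {V p t : ℝ} (hp : p ≠ 0)
    (hUt : DifferentiableAt ℝ (U (V / p)) t)
    (hUz : ∀ᶠ w in 𝓝 (V / p), DifferentiableAt ℝ (fun z => U z t) w)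
    (hUzz : DifferentiableAt ℝ (deriv fun z => U z t) (V / p)) :
    bondPricingOperator σ ρ s r (fun V p t => perspective (fun z => U z t) V p) V p t
      = p * reducedPricingOperator σ ρ s U (V / p) t := by
  have htime : deriv (fun τ => perspective (fun z => U z τ) V p) t = p * deriv (U (V / p)) t :=
    deriv_const_mul p hUt
  rw [bondPricingOperator, htime, deriv_perspective_left _ hp, deriv_deriv_perspective_left _ hp,
    deriv_perspective_right hp hUz.self_of_nhds, deriv_left_deriv_right_perspective hp hUz hUzz,
    deriv_deriv_perspective_right hp hUz hUzz, reducedPricingOperator, tangentIntercept,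
    perspective]
  field_simp
  ring

theorem corporate_bond_dimension_reduction_general (σ ρ s : ℝ → ℝ → ℝ) (r : ℝ → ℝ → ℝ → ℝ)
    (T K : ℝ) {c : ℝ} (hc : 0 < c) (U : ℝ → ℝ → ℝ)
    (hUt : ∀ z t, 0 < z → DifferentiableAt ℝ (U z) t)
    (hUz : ∀ t, DifferentiableOn ℝ (fun z => U z t) (Ioi 0))
    (hUzz : ∀ t, DifferentiableOn ℝ (deriv fun z => U z t) (Ioi 0)) :
    ((∀ V p t, 0 < V → 0 < p →
        bondPricingOperator (σ (V / p) t) (ρ (V / p) t) (s (V / p) t) (r V p t)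
          (fun V p t => perspective (fun z => U z t) V p) V p t = 0) ↔
      ∀ z t, 0 < z → reducedPricingOperator (σ z t) (ρ z t) (s z t) U z t = 0) ∧
    ((∀ V p, 0 < V → 0 < p → perspective (fun z => U z T) V p = max (K * p) (c * V)) ↔
      ∀ z, 0 < z → U z T = K + c * max (z - K / c) 0) := by
  let L (t z : ℝ) : ℝ := reducedPricingOperator (σ z t) (ρ z t) (s z t) U z t
  have hreduce (V p t : ℝ) (hV : 0 < V) (hp : 0 < p) :
      bondPricingOperator (σ (V / p) t) (ρ (V / p) t) (s (V / p) t) (r V p t)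
        (fun V p t => perspective (fun z => U z t) V p) V p t = perspective (L t) V p := by
    have hz : 0 < V / p := div_pos hV hp
    exact bondPricingOperator_perspective _ _ _ _ hp.ne' (hUt _ t hz)
      ((hUz t).eventually_differentiableAt (Ioi_mem_nhds hz))
      ((hUzz t).differentiableAt (Ioi_mem_nhds hz))
  have hequation (t : ℝ) : (∀ V p, 0 < V → 0 < p → perspective (L t) V p = 0) ↔
      ∀ z, 0 < z → L t z = 0 := by
    simpa only [perspective, mul_zero] using
      forall_pos_perspective_eq_iff (u := L t) (v := fun _ => 0)
  constructor
  · constructor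
    · exact fun h z t =>
        (hequation t).1 (fun V p hV hp => (hreduce V p t hV hp).symm.trans (h V p t hV hp)) z
    · exact fun h V p t hV hp =>
        (hreduce V p t hV hp).trans ((hequation t).2 (fun z => h z t) V p hV hp)
  · rw [← forall_pos_perspective_eq_iff]
    exact forall₄_congr fun V p _ hp => by rw [perspective_call_payoff K hc hp]

/-- Corporate bond convertible at maturity: dimension reduction.
With `C(V,p,t) = p · U(V/p,t)`, the two-dimensional pricing problem for `C` is
equivalent to the one-dimensional degenerate problem for `U`. -/
theorem corporate_bond_dimension_reduction (σV ρ T K α m n : ℝ)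
    (hσV : 0 < σV) (hK : 0 < K) (hα : 0 < α) (hm : 0 < m) (hn : 0 ≤ n)
    (Sigp : ℝ → ℝ) (hSigp : Continuous Sigp)
    (r : ℝ → ℝ → ℝ)
    (U : ℝ → ℝ → ℝ)
    (hU : ContDiffOn ℝ 2 (fun q : ℝ × ℝ => U q.1 q.2) {q : ℝ × ℝ | 0 < q.1})
    (C : ℝ → ℝ → ℝ → ℝ)
    (hC : ∀ V p t, C V p t = p * U (V / p) t) :
    ((∀ V p t : ℝ, 0 < V → 0 < p →
        deriv (fun τ => C V p τ) t
            + (1 / 2) * (σV ^ 2 * V ^ 2 * deriv (deriv (fun v => C v p t)) V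
                - 2 * ρ * σV * Sigp t * V * p
                    * deriv (fun v => deriv (fun q => C v q t) p) V
                + (Sigp t) ^ 2 * p ^ 2 * deriv (deriv (fun q => C V q t)) p)
            + r t p * V * deriv (fun v => C v p t) V
            + r t p * p * deriv (fun q => C V q t) p
            - r t p * C V p t = 0) ↔
      (∀ z t : ℝ, 0 < z →
        deriv (fun τ => U z τ) t
            + (1 / 2) * (σV ^ 2 + 2 * ρ * σV * Sigp t + (Sigp t) ^ 2) * z ^ 2
                * deriv (deriv (fun w => U w t)) z = 0))
    ∧
    ((∀ V p : ℝ, 0 < V → 0 < p →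
        C V p T = max (K * p) (α / (m + n * α) * V)) ↔
      (∀ z : ℝ, 0 < z →
        U z T = K + α / (m + n * α) * max (z - K * (m + n * α) / α) 0)) := by
  obtain rfl : C = fun V p t => perspective (fun z => U z t) V p := by
    funext V p t
    exact hC V p t
  have hc : 0 < α / (m + n * α) := by positivity
  have hopen : IsOpen {q : ℝ × ℝ | 0 < q.1} := isOpen_lt continuous_const continuous_fst
  have hUt (z t : ℝ) (hz : 0 < z) : DifferentiableAt ℝ (U z) t :=
    ((hU.contDiffAt (hopen.mem_nhds hz)).differentiableAt two_ne_zero).comp t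
      (f := fun τ => (z, τ)) (by fun_prop)
  have hslice (t : ℝ) : ContDiffOn ℝ 2 (fun z => U z t) (Ioi 0) :=
    hU.comp (contDiff_id.prodMk contDiff_const).contDiffOn fun _ hz => hz
  rw [← div_div_eq_mul_div]
  exact corporate_bond_dimension_reduction_general (fun _ _ => σV) (fun _ _ => ρ)
    (fun _ t => Sigp t) (fun _ p t => r t p) T K hc U hUt
    (fun t => (hslice t).differentiableOn two_ne_zero)
    (fun t => ((hslice t).deriv_of_isOpen (m := 1) isOpen_Ioi (by norm_num)).differentiableOn
      one_ne_zero)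
end
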